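/- Let a, b be integers, d = a² + ab + b², ω = e^{0.11πi} ∈ ℂ, and let A = A(a,b) be the 4×4 matrix with rows (−1, 1, 0, 0), (0, −1, 0, 0), (0, 0, −1, 1), (a, b, 0, −1). Then the determinant of the Hermitian matrix B = (1 − ω)·A + (1 − ω̄)·Aᵀ is the real number (2·cos(0.11π) − 2)²·((2·cos(0.11π) − 1)² + d·(2·cos(0.11π) − 2)). In particular, det B < 0 whenever d ≥ 7. -/

import Mathlib

open Matrix Complex

/-!
Plumbing glues two Seifert forms along a rank-one block, so `B` is a block matrix with rank-one
off-diagonal blocks `u vᵀ` and `w zᵀ` and diagonal blocks `M`, `N`, and its determinant is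
`det M * det N - (zᵀ adj(M) u) (vᵀ adj(N) w)`. For the trefoil both diagonal blocks equal a
matrix `H`; with `x = ω + ω̄`, one has `det H = (x - 2) (x - 1)` and the quadratic form of `adj H`
at `(a, b)` is `(x - 2) (a² + ab + b²)`, which is how `d` enters. Since `x = 2 cos (0.11 π)` and
`cos (0.11 π) < 0.943`, the last factor of `det B` is negative as soon as `d ≥ 7`.
-/

section RankOneBlocks

open Polynomial

variable {R S m n : Type*} [CommRing R] [CommRing S]

theorem map_vecMulVec (f : R →+* S) (u : m → R) (v : n → R) :
    (vecMulVec u v).map f = vecMulVec (f ∘ u) (f ∘ v) := by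
  ext i j
  exact map_mul f (u i) (v j)

variable [Fintype m] [DecidableEq m] [Fintype n] [DecidableEq n]

theorem map_dotProduct_adjugate_mulVec (f : R →+* S) (A : Matrix m m R) (u v : m → R) :
    f (v ⬝ᵥ A.adjugate *ᵥ u) = (f ∘ v) ⬝ᵥ (A.map f).adjugate *ᵥ (f ∘ u) := by
  have map_adjugate_mulVec : f ∘ (A.adjugate *ᵥ u) = (A.map f).adjugate *ᵥ (f ∘ u) := by
    rw [← RingHom.mapMatrix_apply, ← RingHom.map_adjugate]
    exact funext (f.map_mulVec A.adjugate u)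
  rw [RingHom.map_dotProduct, map_adjugate_mulVec]

theorem map_det_fromBlocks_vecMulVec (f : R →+* S) (M : Matrix m m R) (N : Matrix n n R)
    (u z : m → R) (v w : n → R) :
    f (fromBlocks M (vecMulVec u v) (vecMulVec w z) N).det =
      (fromBlocks (M.map f) (vecMulVec (f ∘ u) (f ∘ v)) (vecMulVec (f ∘ w) (f ∘ z))
        (N.map f)).det := by
  rw [RingHom.map_det, RingHom.mapMatrix_apply, fromBlocks_map, map_vecMulVec, map_vecMulVec]

theorem adjugate_mulVec_of_isUnit_det {A : Matrix m m R} (hA : IsUnit A.det) (u : m → R) :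
    A.adjugate *ᵥ u = A.det • A⁻¹ *ᵥ u := by
  rw [det_smul_inv_mulVec_eq_cramer A u hA, cramer_eq_adjugate_mulVec]

theorem det_add_vecMulVec_of_isUnit_det {A : Matrix m m R} (hA : IsUnit A.det) (u v : m → R) :
    (A + vecMulVec u v).det = A.det + v ⬝ᵥ A.adjugate *ᵥ u := by
  have det_one_add :
      (1 + replicateRow Unit v * A⁻¹ * replicateCol Unit u).det = 1 + v ⬝ᵥ A⁻¹ *ᵥ u := by
    rw [Matrix.mul_assoc, ← replicateCol_mulVec, det_unique]
    rfl
  rw [vecMulVec_eq Unit, det_add_replicateCol_mul_replicateRow hA, det_one_add,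
    adjugate_mulVec_of_isUnit_det hA, dotProduct_smul, smul_eq_mul, mul_add, mul_one]

theorem det_fromBlocks_vecMulVec_of_isUnit_det {M : Matrix m m R} {N : Matrix n n R}
    (hM : IsUnit M.det) (hN : IsUnit N.det) (u z : m → R) (v w : n → R) :
    (fromBlocks M (vecMulVec u v) (vecMulVec w z) N).det =
      M.det * N.det - (z ⬝ᵥ M.adjugate *ᵥ u) * (v ⬝ᵥ N.adjugate *ᵥ w) := by
  let _ := invertibleOfIsUnitDet M hM
  have schur_complement : N - vecMulVec w z * ⅟M * vecMulVec u v =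
      N + vecMulVec (-(z ⬝ᵥ M⁻¹ *ᵥ u) • w) v := by
    rw [invOf_eq_nonsing_inv, Matrix.mul_assoc, mul_vecMulVec, vecMulVec_mul_vecMulVec,
      smul_vecMulVec, vecMulVec_smul, neg_smul, sub_eq_add_neg]
  rw [det_fromBlocks₁₁, schur_complement, det_add_vecMulVec_of_isUnit_det hN,
    adjugate_mulVec_of_isUnit_det hM]
  simp only [mulVec_smul, dotProduct_smul, smul_eq_mul]
  ring

theorem isUnit_det_map_algebraMap_fractionRing {A : Matrix m m R}
    (hA : A.det ∈ nonZeroDivisors R) : IsUnit (A.map (algebraMap R (FractionRing R))).det := by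
  rw [← RingHom.mapMatrix_apply, ← RingHom.map_det]
  exact IsLocalization.map_units (FractionRing R) ⟨A.det, hA⟩

theorem det_fromBlocks_vecMulVec_of_det_mem_nonZeroDivisors {M : Matrix m m R} {N : Matrix n n R}
    (hM : M.det ∈ nonZeroDivisors R) (hN : N.det ∈ nonZeroDivisors R) (u z : m → R)
    (v w : n → R) :
    (fromBlocks M (vecMulVec u v) (vecMulVec w z) N).det =
      M.det * N.det - (z ⬝ᵥ M.adjugate *ᵥ u) * (v ⬝ᵥ N.adjugate *ᵥ w) := by
  apply IsFractionRing.injective R (FractionRing R)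
  rw [map_det_fromBlocks_vecMulVec, det_fromBlocks_vecMulVec_of_isUnit_det
    (isUnit_det_map_algebraMap_fractionRing hM) (isUnit_det_map_algebraMap_fractionRing hN)]
  simp only [map_sub, map_mul, map_dotProduct_adjugate_mulVec, RingHom.map_det,
    RingHom.mapMatrix_apply]

theorem charmatrix_neg_map_eval_zero (A : Matrix m m R) :
    (charmatrix (-A)).map (evalRingHom 0) = A := by
  ext i j
  simp [charmatrix_apply, diagonal_apply, apply_ite]

-- The charmatrix of `-M` specialises to `M` at `X = 0`, and its determinant, being monic, is a
-- nonzerodivisor.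
theorem det_fromBlocks_vecMulVec (M : Matrix m m R) (N : Matrix n n R) (u z : m → R)
    (v w : n → R) :
    (fromBlocks M (vecMulVec u v) (vecMulVec w z) N).det =
      M.det * N.det - (z ⬝ᵥ M.adjugate *ᵥ u) * (v ⬝ᵥ N.adjugate *ᵥ w) := by
  have evalRingHom_C (r : R) : evalRingHom 0 (C r) = r := eval_C
  have generic := congrArg (evalRingHom 0) <|
    det_fromBlocks_vecMulVec_of_det_mem_nonZeroDivisors
      (charpoly_monic (-M)).mem_nonZeroDivisors (charpoly_monic (-N)).mem_nonZeroDivisors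
      (C ∘ u) (C ∘ z) (C ∘ v) (C ∘ w)
  rw [map_det_fromBlocks_vecMulVec] at generic
  simpa only [map_sub, map_mul, map_dotProduct_adjugate_mulVec, RingHom.map_det,
    RingHom.mapMatrix_apply, charmatrix_neg_map_eval_zero, Function.comp_def, evalRingHom_C]
    using generic

end RankOneBlocks

section Plumbing

variable {R m n : Type*} [CommRing R]

/-- A Seifert matrix of the plumbing of two surfaces with Seifert matrices `V` and `W`, along an
interval of class `p` in the first surface and `q` in the second, in the basis obtained by
concatenation. The convention is that cycles of the first surface link the push-offs of those of
the second trivially, so the upper right block vanishes. -/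
def plumbingMatrix (V : Matrix m m R) (W : Matrix n n R) (p : m → R) (q : n → R) :
    Matrix (m ⊕ n) (m ⊕ n) R :=
  fromBlocks V 0 (vecMulVec q p) W

variable (R) in
/-- The Seifert matrix of the fibre surface of the positive trefoil knot. -/
def trefoilSeifertMatrix : Matrix (Fin 2) (Fin 2) R :=
  !![-1, 1; 0, -1]

variable [StarRing R]

/-- The matrix whose signature is the Levine–Tristram signature at `ω` of a link with Seifert
matrix `A`. It is Hermitian when the entries of `A` are fixed by the involution of `R`. -/
def levineTristramMatrix (ω : R) (A : Matrix m m R) : Matrix m m R :=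
  (1 - ω) • A + (1 - starRingEnd R ω) • Aᵀ

theorem levineTristramMatrix_reindex (e : m ≃ n) (ω : R) (A : Matrix m m R) :
    levineTristramMatrix ω (reindex e e A) = reindex e e (levineTristramMatrix ω A) :=
  rfl

theorem levineTristramMatrix_plumbingMatrix (ω : R) (V : Matrix m m R) (W : Matrix n n R)
    (p : m → R) (q : n → R) :
    levineTristramMatrix ω (plumbingMatrix V W p q) =
      fromBlocks (levineTristramMatrix ω V) (vecMulVec ((1 - starRingEnd R ω) • p) q)
        (vecMulVec ((1 - ω) • q) p) (levineTristramMatrix ω W) := by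
  simp [levineTristramMatrix, plumbingMatrix, fromBlocks_transpose, fromBlocks_smul,
    fromBlocks_add, transpose_vecMulVec, smul_vecMulVec]

theorem det_levineTristramMatrix_plumbingMatrix [Fintype m] [DecidableEq m] [Fintype n]
    [DecidableEq n] (ω : R) (V : Matrix m m R) (W : Matrix n n R) (p : m → R) (q : n → R) :
    (levineTristramMatrix ω (plumbingMatrix V W p q)).det =
      (levineTristramMatrix ω V).det * (levineTristramMatrix ω W).det -
        (1 - ω) * (1 - starRingEnd R ω) *
          (p ⬝ᵥ (levineTristramMatrix ω V).adjugate *ᵥ p) *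
          (q ⬝ᵥ (levineTristramMatrix ω W).adjugate *ᵥ q) := by
  rw [levineTristramMatrix_plumbingMatrix, det_fromBlocks_vecMulVec]
  simp only [mulVec_smul, dotProduct_smul, smul_eq_mul]
  ring

theorem levineTristramMatrix_trefoilSeifertMatrix (ω : R) :
    levineTristramMatrix ω (trefoilSeifertMatrix R) =
      !![ω + starRingEnd R ω - 2, 1 - ω; 1 - starRingEnd R ω, ω + starRingEnd R ω - 2] := by
  ext i j
  fin_cases i <;> fin_cases j <;> simp [levineTristramMatrix, trefoilSeifertMatrix] <;> ring

theorem one_sub_mul_one_sub_starRingEnd {ω : R} (hω : ω * starRingEnd R ω = 1) :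
    (1 - ω) * (1 - starRingEnd R ω) = 2 - (ω + starRingEnd R ω) := by
  linear_combination hω

theorem det_levineTristramMatrix_trefoilSeifertMatrix {ω : R} (hω : ω * starRingEnd R ω = 1) :
    (levineTristramMatrix ω (trefoilSeifertMatrix R)).det =
      (ω + starRingEnd R ω - 2) * (ω + starRingEnd R ω - 1) := by
  rw [levineTristramMatrix_trefoilSeifertMatrix, det_fin_two_of,
    one_sub_mul_one_sub_starRingEnd hω]
  ring

theorem dotProduct_adjugate_levineTristramMatrix_trefoilSeifertMatrix (ω a b : R) :
    ![a, b] ⬝ᵥ (levineTristramMatrix ω (trefoilSeifertMatrix R)).adjugate *ᵥ ![a, b] =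
      (ω + starRingEnd R ω - 2) * (a ^ 2 + a * b + b ^ 2) := by
  rw [levineTristramMatrix_trefoilSeifertMatrix, adjugate_fin_two_of]
  simp only [cons_mulVec, empty_mulVec, vec2_dotProduct']
  ring

theorem det_levineTristramMatrix_trefoil_plumbing {ω : R} (hω : ω * starRingEnd R ω = 1)
    (a b : R) :
    (levineTristramMatrix ω (plumbingMatrix (trefoilSeifertMatrix R) (trefoilSeifertMatrix R)
      ![a, b] ![0, 1])).det =
      (ω + starRingEnd R ω - 2) ^ 2 *
        ((ω + starRingEnd R ω - 1) ^ 2 +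
          (a ^ 2 + a * b + b ^ 2) * (ω + starRingEnd R ω - 2)) := by
  rw [det_levineTristramMatrix_plumbingMatrix, det_levineTristramMatrix_trefoilSeifertMatrix hω,
    one_sub_mul_one_sub_starRingEnd hω]
  simp only [dotProduct_adjugate_levineTristramMatrix_trefoilSeifertMatrix]
  ring

end Plumbing

theorem exp_ofReal_mul_I_mul_conj (θ : ℝ) :
    exp (θ * I) * starRingEnd ℂ (exp (θ * I)) = 1 := by
  rw [mul_conj', norm_exp_ofReal_mul_I, ofReal_one, one_pow]

theorem exp_ofReal_mul_I_add_conj (θ : ℝ) :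
    exp (θ * I) + starRingEnd ℂ (exp (θ * I)) = ((2 * Real.cos θ : ℝ) : ℂ) := by
  rw [add_conj, exp_ofReal_mul_I_re]

theorem sq_mul_sq_add_mul_neg_iff (x d : ℝ) :
    (x - 2) ^ 2 * ((x - 1) ^ 2 + d * (x - 2)) < 0 ↔ (x - 1) ^ 2 < d * (2 - x) := by
  rcases eq_or_ne x 2 with rfl | hx
  · norm_num
  · rw [← smul_eq_mul, smul_neg_iff_of_pos_left (sq_pos_of_ne_zero (sub_ne_zero.mpr hx))]
    constructor <;> intro h <;> linarith

theorem cos_zero_point_eleven_mul_pi_lt : Real.cos (0.11 * Real.pi) < 0.943 := by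
  have pi_gt := Real.pi_gt_d2
  have pi_lt := Real.pi_lt_d2
  have taylor : Real.cos (0.11 * Real.pi) ≤
      1 - (0.11 * Real.pi) ^ 2 / 2 + (0.11 * Real.pi) ^ 4 * (5 / 96) := by
    have abs_eq : |0.11 * Real.pi| = 0.11 * Real.pi := abs_of_pos (by positivity)
    have cos_bound := Real.cos_bound (x := 0.11 * Real.pi) (by rw [abs_eq]; linarith)
    rw [abs_eq] at cos_bound
    linarith [(abs_le.mp cos_bound).2]
  have sq_gt : 0.119 < (0.11 * Real.pi) ^ 2 := by nlinarith
  have sq_lt : (0.11 * Real.pi) ^ 2 < 0.121 := by nlinarith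
  nlinarith

-- With `c = cos (0.11 * π)`, the threshold `(2 * c - 1) ^ 2 / (2 - 2 * c)` is about `6.58`.
theorem sq_two_mul_cos_sub_one_lt {d : ℝ} (hd : 7 ≤ d) :
    (2 * Real.cos (0.11 * Real.pi) - 1) ^ 2 < d * (2 - 2 * Real.cos (0.11 * Real.pi)) := by
  have cos_lt := cos_zero_point_eleven_mul_pi_lt
  have le_cos := Real.neg_one_le_cos (0.11 * Real.pi)
  nlinarith

theorem det_hermitian_two_trefoil_plumbing_general (a b θ : ℝ)
    (ω : ℂ) (hω : ω = Complex.exp (θ * Complex.I))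
    (A : Matrix (Fin 4) (Fin 4) ℂ)
    (hA : A = !![-1, 1, 0, 0; 0, -1, 0, 0; 0, 0, -1, 1; (a : ℂ), (b : ℂ), 0, -1]) :
    ((1 - ω) • A + (1 - (starRingEnd ℂ) ω) • Aᵀ).det =
      (((2 * Real.cos θ - 2) ^ 2 *
        ((2 * Real.cos θ - 1) ^ 2 +
          (a ^ 2 + a * b + b ^ 2) * (2 * Real.cos θ - 2)) : ℝ) : ℂ) ∧
    ((((1 - ω) • A + (1 - (starRingEnd ℂ) ω) • Aᵀ).det).re < 0 ↔
      (2 * Real.cos θ - 1) ^ 2 < (a ^ 2 + a * b + b ^ 2) * (2 - 2 * Real.cos θ)) := by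
  have eq_reindex_plumbing : A = reindex finSumFinEquiv finSumFinEquiv
      (plumbingMatrix (trefoilSeifertMatrix ℂ) (trefoilSeifertMatrix ℂ) ![(a : ℂ), (b : ℂ)]
        ![0, 1]) := by
    rw [hA, ← Equiv.symm_apply_eq]
    ext (i | i) (j | j) <;> fin_cases i <;> fin_cases j <;>
      simp [plumbingMatrix, trefoilSeifertMatrix, finSumFinEquiv]
  have det_eq : (levineTristramMatrix ω A).det =
      (((2 * Real.cos θ - 2) ^ 2 * ((2 * Real.cos θ - 1) ^ 2 +
        (a ^ 2 + a * b + b ^ 2) * (2 * Real.cos θ - 2)) : ℝ) : ℂ) := by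
    rw [eq_reindex_plumbing, hω, levineTristramMatrix_reindex, det_reindex_self,
      det_levineTristramMatrix_trefoil_plumbing (exp_ofReal_mul_I_mul_conj θ),
      exp_ofReal_mul_I_add_conj]
    push_cast
    rfl
  rw [levineTristramMatrix] at det_eq
  rw [det_eq, ofReal_re]
  exact ⟨rfl, sq_mul_sq_add_mul_neg_iff (2 * Real.cos θ) (a ^ 2 + a * b + b ^ 2)⟩

theorem det_hermitian_two_trefoil_plumbing (a b : ℤ)
    (ω : ℂ) (hω : ω = Complex.exp ((0.11 * Real.pi : ℝ) * Complex.I))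
    (A : Matrix (Fin 4) (Fin 4) ℂ)
    (hA : A = !![-1, 1, 0, 0; 0, -1, 0, 0; 0, 0, -1, 1; (a : ℂ), (b : ℂ), 0, -1]) :
    ((1 - ω) • A + (1 - (starRingEnd ℂ) ω) • Aᵀ).det =
      (((2 * Real.cos (0.11 * Real.pi) - 2) ^ 2 *
        ((2 * Real.cos (0.11 * Real.pi) - 1) ^ 2 +
          ((a ^ 2 + a * b + b ^ 2 : ℤ) : ℝ) * (2 * Real.cos (0.11 * Real.pi) - 2)) : ℝ) : ℂ) ∧
    (7 ≤ a ^ 2 + a * b + b ^ 2 →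
      (((1 - ω) • A + (1 - (starRingEnd ℂ) ω) • Aᵀ).det).re < 0) := by
  obtain ⟨det_eq, re_det_neg_iff⟩ :=
    det_hermitian_two_trefoil_plumbing_general a b (0.11 * Real.pi) ω hω A (by simpa using hA)
  exact ⟨by exact_mod_cast det_eq, fun hd =>
    re_det_neg_iff.mpr (sq_two_mul_cos_sub_one_lt (by exact_mod_cast hd))⟩
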